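/- arXiv:1810.06162 — 3 statements merged into one kernel-verified Lean document; each statement's English description precedes it below -/
import Mathlib

section
/- Let H be a reflexive digraph and let T be a tournament on V(H) consistent with H. If u, v, w are vertices with u → v, v → w, and w → u in T, then the set {u, v, w} is complete in H (i.e., (x,y) ∈ E(H) for all x,y ∈ {u,v,w} with x ≠ y) or independent in H (i.e., (x,y) ∉ E(H) for all x,y ∈ {u,v,w} with x ≠ y). -/
/-- A digraph on vertex type `V` is given by its edge relation `E : V → V → Prop`
(loops allowed).  The min-ordering property for a strict linear order `r`:
for any edges `(u,v)` and `(u',v')` with `r u u'` and `r v' v`, `(u,v')` is also an edge. -/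
def MinOrderProp {V : Type*} (E r : V → V → Prop) : Prop :=
  ∀ u v u' v' : V, E u v → E u' v' → r u u' → r v' v → E u v'

/-- The edge relation of the pair digraph `H⁺` of a digraph with edge relation `E`:
for all vertices `u, u', v, v'`, there are edges `(u,u') → (v,v')` and `(v',v) → (u',u)`
whenever `E u v`, `E u' v'`, `¬ E u v'`, and the endpoints have distinct coordinates. -/
def pairEdge {V : Type*} (E : V → V → Prop) (p q : V × V) : Prop :=
  ∃ u u' v v' : V, u ≠ u' ∧ v ≠ v' ∧ E u v ∧ E u' v' ∧ ¬ E u v' ∧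
    ((p = (u, u') ∧ q = (v, v')) ∨ (p = (v', v) ∧ q = (u', u)))

/-- The edge relation of the implication graph `H*` of a reflexive digraph with edge
relation `E`: for any three distinct vertices `u, v, w`, there are edges
`(u,v) → (w,v)` and `(v,w) → (v,u)` iff `[E u w ∧ ¬ E u v]` or `[E w u ∧ ¬ E v u]`. -/
def implEdge {V : Type*} (E : V → V → Prop) (p q : V × V) : Prop :=
  ∃ u v w : V, u ≠ v ∧ v ≠ w ∧ u ≠ w ∧
    ((E u w ∧ ¬ E u v) ∨ (E w u ∧ ¬ E v u)) ∧
    ((p = (u, v) ∧ q = (w, v)) ∨ (p = (v, w) ∧ q = (v, u)))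

/-- A tournament on `V`: for each pair of distinct vertices exactly one of the two
directed edges is present, and there are no loops. -/
def IsTournamentRel {V : Type*} (T : V → V → Prop) : Prop :=
  (∀ u, ¬ T u u) ∧ ∀ u v : V, u ≠ v → (T u v ↔ ¬ T v u)

/-- A tournament (orientation of the complete graph) `T` is consistent with the digraph `E`
if for every vertex `(u,v)` of the implication graph and every vertex `(u',v')` reachable
from `(u,v)` by a directed walk in the implication graph, `u → v` in `T` implies
`u' → v'` in `T`. -/
def ConsistentWith {V : Type*} (E T : V → V → Prop) : Prop :=
  ∀ u v u' v' : V, u ≠ v → u' ≠ v' →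
    Relation.ReflTransGen (implEdge E) (u, v) (u', v') → T u v → T u' v'

/-- `u, v` form an invertible pair of the digraph `E`: they are distinct and `(u,v)` and
`(v,u)` lie in the same strong component of the pair digraph. -/
def InvertiblePair {V : Type*} (E : V → V → Prop) (u v : V) : Prop :=
  u ≠ v ∧ Relation.ReflTransGen (pairEdge E) (u, v) (v, u) ∧
    Relation.ReflTransGen (pairEdge E) (v, u) (u, v)

/-- The tournament obtained from `T` by reversing the direction of all edges `(x, y)` of `T`
with `u → x`, `x → y`, `y → u` in `T` (the set `E_u`). -/
def revTri {V : Type*} (T : V → V → Prop) (u : V) (x y : V) : Prop :=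
  (T x y ∧ ¬ (T u x ∧ T x y ∧ T y u)) ∨ (T y x ∧ T u y ∧ T x u)

/-!
Reversing all edges of `E` does not change the implication graph. If `a → b → c → a` in `T` and
`E a c` but not `E a b`, the implication graph has the edge `(a, b) → (c, b)`, and consistency
forces `c → b`, against `b → c`. So `E a c → E a b`, and by reversal `E c a → E b a`. Over the three
rotations of the triangle these implications form one cycle through all six ordered pairs.
-/

section ConsistentTriangles

variable {V : Type*} {E T : V → V → Prop} {a b c : V}

theorem implEdge_flip : implEdge (flip E) = implEdge E := by
  ext p q
  simp only [implEdge, flip, or_comm]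

theorem ConsistentWith.flip (h : ConsistentWith E T) : ConsistentWith (flip E) T := by
  simpa only [ConsistentWith, implEdge_flip] using h

theorem IsTournamentRel.asymm (hT : IsTournamentRel T) : Std.Asymm T where
  asymm x y hxy :=
    have hne : x ≠ y := by
      rintro rfl
      exact hT.1 x hxy
    (hT.2 x y hne).mp hxy

/-- A directed triangle `a → b → c → a` of `T`, with its vertices listed in cyclic order. -/
structure IsCyclicTriple (T : V → V → Prop) (a b c : V) : Prop where
  fst_snd : T a b
  snd_trd : T b c
  trd_fst : T c a

namespace IsCyclicTriple

theorem rotate (h : IsCyclicTriple T a b c) : IsCyclicTriple T b c a :=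
  ⟨h.snd_trd, h.trd_fst, h.fst_snd⟩

variable [Std.Asymm T]

theorem edge_fst_snd_of_edge_fst_trd (h : IsCyclicTriple T a b c) (hcons : ConsistentWith E T)
    (hac : E a c) : E a b := by
  by_contra hab
  have hne_ab : a ≠ b := ne_of_irrefl h.fst_snd
  have hne_bc : b ≠ c := ne_of_irrefl h.snd_trd
  have hne_ac : a ≠ c := (ne_of_irrefl h.trd_fst).symm
  have himpl : implEdge E (a, b) (c, b) :=
    ⟨a, b, c, hne_ab, hne_bc, hne_ac, .inl ⟨hac, hab⟩, .inl ⟨rfl, rfl⟩⟩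
  have hcb : T c b := hcons a b c b hne_ab hne_bc.symm (.single himpl) h.fst_snd
  exact Std.Asymm.asymm b c h.snd_trd hcb

theorem edge_snd_fst_of_edge_trd_fst (h : IsCyclicTriple T a b c) (hcons : ConsistentWith E T)
    (hca : E c a) : E b a :=
  h.edge_fst_snd_of_edge_fst_trd hcons.flip hca

theorem edge_tfae (h : IsCyclicTriple T a b c) (hcons : ConsistentWith E T) :
    List.TFAE [E a b, E c b, E c a, E b a, E b c, E a c] := by
  tfae_have 1 → 2 := h.rotate.edge_snd_fst_of_edge_trd_fst hcons
  tfae_have 2 → 3 := h.rotate.rotate.edge_fst_snd_of_edge_fst_trd hcons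
  tfae_have 3 → 4 := h.edge_snd_fst_of_edge_trd_fst hcons
  tfae_have 4 → 5 := h.rotate.edge_fst_snd_of_edge_fst_trd hcons
  tfae_have 5 → 6 := h.rotate.rotate.edge_snd_fst_of_edge_trd_fst hcons
  tfae_have 6 → 1 := h.edge_fst_snd_of_edge_fst_trd hcons
  tfae_finish

theorem edge_iff (h : IsCyclicTriple T a b c) (hcons : ConsistentWith E T) {x y : V}
    (hx : x ∈ ({a, b, c} : Set V)) (hy : y ∈ ({a, b, c} : Set V)) (hxy : x ≠ y) :
    E x y ↔ E a b := by
  have htfae := h.edge_tfae hcons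
  rcases hx with rfl | rfl | rfl <;> rcases hy with rfl | rfl | rfl
  · exact absurd rfl hxy
  · exact Iff.rfl
  · exact htfae.out 5 0
  · exact htfae.out 3 0
  · exact absurd rfl hxy
  · exact htfae.out 4 0
  · exact htfae.out 2 0
  · exact htfae.out 1 0
  · exact absurd rfl hxy

end IsCyclicTriple

theorem stmt_9_general [Std.Asymm T] (hcons : ConsistentWith E T) {u v w : V}
    (h : IsCyclicTriple T u v w) :
    (∀ x ∈ ({u, v, w} : Set V), ∀ y ∈ ({u, v, w} : Set V), x ≠ y → E x y) ∨
      (∀ x ∈ ({u, v, w} : Set V), ∀ y ∈ ({u, v, w} : Set V), x ≠ y → ¬ E x y) := by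
  by_cases huv : E u v
  · exact .inl fun x hx y hy hxy => (h.edge_iff hcons hx hy hxy).mpr huv
  · exact .inr fun x hx y hy hxy => mt (h.edge_iff hcons hx hy hxy).mp huv

end ConsistentTriangles

/-- Let `T` be a tournament consistent with a reflexive digraph `H`.
If `u → v`, `v → w`, `w → u` in `T`, then `{u, v, w}` is complete or independent in `H`. -/
theorem stmt_9 {V : Type*} [Fintype V] (E : V → V → Prop) (hrefl : ∀ v, E v v)
    (T : V → V → Prop) (hT : IsTournamentRel T) (hcons : ConsistentWith E T)
    (u v w : V) (h1 : T u v) (h2 : T v w) (h3 : T w u) :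
    (∀ x ∈ ({u, v, w} : Set V), ∀ y ∈ ({u, v, w} : Set V), x ≠ y → E x y) ∨
      (∀ x ∈ ({u, v, w} : Set V), ∀ y ∈ ({u, v, w} : Set V), x ≠ y → ¬ E x y) := by
  have := hT.asymm
  exact stmt_9_general hcons ⟨h1, h2, h3⟩
end

section
/- Let H be a reflexive digraph, let T be a tournament on V(H) consistent with H, and let u be a vertex of H. Let E_u be the set of edges (v,w) of T such that u → v, v → w, and w → u in T, and let T' be the tournament obtained from T by reversing the direction of all edges in E_u. Then every directed triangle of T' (three vertices x, y, z with x → y, y → z, z → x in T') is also a directed triangle of T, and no directed triangle of T' contains the vertex u. -/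
/-!
In `T'` the out-neighbourhood of `u` is closed under successors: every edge of `T` leaving it ends
at an in-neighbour of `u`, since `u` itself would contradict asymmetry, and is therefore reversed.
Hence the vertices of a closed walk of `T'` are either all out-neighbours of `u` or none of them is.
A reversed edge joins an in-neighbour of `u` to an out-neighbour, and the edges of `T'` leaving `u`
end at out-neighbours, so a closed walk uses no reversed edge and avoids `u`.
-/

namespace IsTournamentRel

variable {V : Type*} {T : V → V → Prop} {u x y : V}

theorem asymm_s12 (hT : IsTournamentRel T) (hxy : T x y) : ¬ T y x := by
  have hne : x ≠ y := by
    rintro rfl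
    exact hT.1 x hxy
  exact (hT.2 x y hne).mp hxy

theorem rel_of_rel_of_revTri (hT : IsTournamentRel T) (hux : T u x) (hxy : revTri T u x y) :
    T u y := by
  rcases hxy with ⟨hTxy, hkept⟩ | ⟨-, huy, -⟩
  · have hyu : ¬ T y u := fun hyu => hkept ⟨hux, hTxy, hyu⟩
    have hne : u ≠ y := by
      rintro rfl
      exact hT.asymm_s12 hux hTxy
    exact (hT.2 u y hne).mpr hyu
  · exact huy

theorem rel_of_rel_of_reflTransGen_revTri (hT : IsTournamentRel T) (hux : T u x)
    (hxy : Relation.ReflTransGen (revTri T u) x y) : T u y := by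
  induction hxy with
  | refl => exact hux
  | tail _ hstep ih => exact hT.rel_of_rel_of_revTri ih hstep

theorem rel_of_revTri_of_reflTransGen (hT : IsTournamentRel T) (hxy : revTri T u x y)
    (hyx : Relation.ReflTransGen (revTri T u) y x) : T x y := by
  rcases hxy with ⟨hTxy, -⟩ | ⟨-, huy, hxu⟩
  · exact hTxy
  · have hux : T u x := hT.rel_of_rel_of_reflTransGen_revTri huy hyx
    exact absurd hxu (hT.asymm_s12 hux)

theorem ne_of_revTri_of_reflTransGen (hT : IsTournamentRel T) (hxy : revTri T u x y)
    (hyx : Relation.ReflTransGen (revTri T u) y x) : x ≠ u := by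
  rintro rfl
  have hTxy : T x y := hT.rel_of_revTri_of_reflTransGen hxy hyx
  exact hT.1 x (hT.rel_of_rel_of_reflTransGen_revTri hTxy hyx)

end IsTournamentRel

theorem stmt_12_general {V : Type*} {T : V → V → Prop} (hT : IsTournamentRel T) {u x y z : V}
    (hxy : revTri T u x y) (hyz : revTri T u y z) (hzx : revTri T u z x) :
    (T x y ∧ T y z ∧ T z x) ∧ x ≠ u ∧ y ≠ u ∧ z ≠ u := by
  have walk_yx : Relation.ReflTransGen (revTri T u) y x := .head hyz (.single hzx)
  have walk_zy : Relation.ReflTransGen (revTri T u) z y := .head hzx (.single hxy)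
  have walk_xz : Relation.ReflTransGen (revTri T u) x z := .head hxy (.single hyz)
  exact ⟨⟨hT.rel_of_revTri_of_reflTransGen hxy walk_yx,
      hT.rel_of_revTri_of_reflTransGen hyz walk_zy,
      hT.rel_of_revTri_of_reflTransGen hzx walk_xz⟩,
    hT.ne_of_revTri_of_reflTransGen hxy walk_yx,
    hT.ne_of_revTri_of_reflTransGen hyz walk_zy,
    hT.ne_of_revTri_of_reflTransGen hzx walk_xz⟩

/-- Let `T` be a tournament consistent with a reflexive digraph `H`, let `u`
be a vertex, and let `T'` be obtained from `T` by reversing all edges `(v,w)` of `T` with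
`u → v`, `v → w`, `w → u` in `T`.  Then every directed triangle of `T'` is a directed
triangle of `T`, and no directed triangle of `T'` contains `u`. -/
theorem stmt_12 {V : Type*} [Fintype V] (E : V → V → Prop) (hrefl : ∀ v, E v v)
    (T : V → V → Prop) (hT : IsTournamentRel T) (hcons : ConsistentWith E T) (u : V)
    (x y z : V) (h1 : revTri T u x y) (h2 : revTri T u y z) (h3 : revTri T u z x) :
    (T x y ∧ T y z ∧ T z x) ∧ x ≠ u ∧ y ≠ u ∧ z ≠ u :=
  stmt_12_general hT h1 h2 h3
end

section
/- Let H be a reflexive digraph. If there exists a tournament on V(H) consistent with H, then there exists an acyclic tournament on V(H) (one with no directed cycles, equivalently no directed triangles) consistent with H. -/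
/-!
On tournaments, consistency is a condition on directed paths `a → b → c` (`PathCompatible`), and
it forces the vertices of a directed triangle to be pairwise joined both ways in `E` or pairwise
nonadjacent. This makes the reversal `revTri T u` consistent as well. The reversal removes all
directed triangles through `u` and creates none through a vertex that lay on no triangle, so
treating the vertices of a finite set one after the other frees all of them. A limit of these
tournaments along an ultrafilter on the finite sets has no directed triangle at all, hence is
transitive.
-/

/-- The local form of consistency: an edge of `E` between the two ends of a directed path
`a → b → c` of `T` forces the edge of `E` in the same direction between `a` and `b`. -/
def PathCompatible {V : Type*} (E T : V → V → Prop) : Prop :=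
  ∀ ⦃a b c : V⦄, T a b → T b c → a ≠ c → (E a c → E a b) ∧ (E c a → E b a)

/-- The vertex `u` lies on a directed triangle of `T`. -/
def OnTriangle {V : Type*} (T : V → V → Prop) (u : V) : Prop :=
  ∃ x y, T u x ∧ T x y ∧ T y u

/-- The limit of a family of relations along an ultrafilter; it inherits from the family the
first-order properties that tournaments and consistency are made of. -/
def ultrafilterLimit {ι V : Type*} (U : Ultrafilter ι) (T : ι → V → V → Prop) (x y : V) : Prop :=
  ∀ᶠ i in U, T i x y

section Tournament

variable {V : Type*} {E T : V → V → Prop} {a b c u v x y : V}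

namespace IsTournamentRel

theorem ne (hT : IsTournamentRel T) (hab : T a b) : a ≠ b := by
  rintro rfl
  exact hT.1 a hab

theorem asymm_s13 (hT : IsTournamentRel T) (hab : T a b) : ¬ T b a :=
  (hT.2 a b (hT.ne hab)).1 hab

theorem rel_of_not_rel (hT : IsTournamentRel T) (hne : a ≠ b) (hba : ¬ T b a) : T a b :=
  (hT.2 a b hne).2 hba

theorem transitive_of_forall_not_onTriangle (hT : IsTournamentRel T)
    (htri : ∀ v, ¬ OnTriangle T v) : ∀ a b c, T a b → T b c → T a c := by
  intro a b c hab hbc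
  have hac : a ≠ c := by
    rintro rfl
    exact hT.asymm_s13 hab hbc
  exact hT.rel_of_not_rel hac fun hca => htri a ⟨b, c, hab, hbc, hca⟩

theorem not_transGen_self (hT : IsTournamentRel T) (htri : ∀ v, ¬ OnTriangle T v) (x : V) :
    ¬ Relation.TransGen T x x := by
  have : IsTrans V T := ⟨hT.transitive_of_forall_not_onTriangle htri⟩
  rw [Relation.transGen_eq_self]
  exact hT.1 x

theorem consistentWith_iff_pathCompatible (hT : IsTournamentRel T) :
    ConsistentWith E T ↔ PathCompatible E T := by
  constructor
  · intro h a b c hab hbc hac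
    have no_forcing : ¬ ((E a c ∧ ¬ E a b) ∨ (E c a ∧ ¬ E b a)) := fun hE =>
      hT.asymm_s13 hbc <| h a b c b (hT.ne hab) (hT.ne hbc).symm
        (.single ⟨a, b, c, hT.ne hab, hT.ne hbc, hac, hE, .inl ⟨rfl, rfl⟩⟩) hab
    tauto
  · intro h u v u' v' _ _ hwalk huv
    refine hwalk.rec (motive := fun p _ => T p.1 p.2) huv ?_
    rintro _ _ - ⟨a, b, c, hab, hbc, hac, hE, ⟨rfl, rfl⟩ | ⟨rfl, rfl⟩⟩ hp
    · refine hT.rel_of_not_rel hbc.symm fun hbc' => ?_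
      have := h hp hbc' hac
      tauto
    · refine hT.rel_of_not_rel hab.symm fun hab' => ?_
      have := h hab' hp hac
      tauto

end IsTournamentRel

theorem PathCompatible.iff_of_triangle (h : PathCompatible E T) (hT : IsTournamentRel T)
    (hab : T a b) (hbc : T b c) (hca : T c a) : (E a b ↔ E a c) ∧ (E b a ↔ E c a) := by
  have path_abc := h hab hbc (hT.ne hca).symm
  have path_bca := h hbc hca (hT.ne hab).symm
  have path_cab := h hca hab (hT.ne hbc).symm
  tauto

theorem isTournamentRel_revTri (hT : IsTournamentRel T) (u : V) :
    IsTournamentRel (revTri T u) := by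
  refine ⟨fun x => ?_, fun x y hxy => ?_⟩
  · have := hT.1 x
    unfold revTri
    tauto
  · have edge_iff := hT.2 x y hxy
    have asymm_x : T u x → ¬ T x u := hT.asymm_s13
    have asymm_y : T u y → ¬ T y u := hT.asymm_s13
    unfold revTri
    tauto

theorem pathCompatible_revTri (hT : IsTournamentRel T) (h : PathCompatible E T) (u : V) :
    PathCompatible E (revTri T u) := by
  rintro a b c (⟨hab, hab_keep⟩ | ⟨hba, hub, hau⟩) (⟨hbc, hbc_keep⟩ | ⟨hcb, huc, hbu⟩) hac
  · exact h hab hbc hac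
  · have hau : T a u := by
      refine hT.rel_of_not_rel ?_ fun hua => hab_keep ⟨hua, hab, hbu⟩
      rintro rfl
      exact hT.asymm_s13 hab hbu
    have path_auc := h hau huc hac
    have path_abu := h hab hbu (hT.ne hau)
    tauto
  · have huc : T u c := by
      refine hT.rel_of_not_rel ?_ fun hcu => hbc_keep ⟨hub, hbc, hcu⟩
      rintro rfl
      exact hT.asymm_s13 hub hbc
    have path_auc := h hau huc hac
    have triangle_aub := h.iff_of_triangle hT hau hub hba
    tauto
  · exact absurd hbu (hT.asymm_s13 hub)

theorem IsTournamentRel.not_onTriangle_revTri_self (hT : IsTournamentRel T) (u : V) :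
    ¬ OnTriangle (revTri T u) u := by
  have irrefl_u := hT.1 u
  rintro ⟨x, y, hux, hxy, hyu⟩
  have hux : T u x := by unfold revTri at hux; tauto
  have hyu : T y u := by unfold revTri at hyu; tauto
  obtain ⟨hxy, hkeep⟩ | ⟨_, huy, _⟩ := hxy
  · exact hkeep ⟨hux, hxy, hyu⟩
  · exact hT.asymm_s13 huy hyu

theorem rel_of_revTri_of_not_onTriangle_left (hx : ¬ OnTriangle T x) (hxy : revTri T u x y) :
    T x y := by
  obtain ⟨hxy, _⟩ | ⟨hyx, huy, hxu⟩ := hxy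
  · exact hxy
  · exact absurd ⟨u, y, hxu, huy, hyx⟩ hx

theorem rel_of_revTri_of_not_onTriangle_right (hy : ¬ OnTriangle T y) (hxy : revTri T u x y) :
    T x y := by
  obtain ⟨hxy, _⟩ | ⟨hyx, huy, hxu⟩ := hxy
  · exact hxy
  · exact absurd ⟨x, u, hyx, hxu, huy⟩ hy

theorem IsTournamentRel.not_onTriangle_revTri (hT : IsTournamentRel T) (u : V)
    (hv : ¬ OnTriangle T v) : ¬ OnTriangle (revTri T u) v := by
  rintro ⟨x, y, hvx, hxy, hyv⟩
  have hvx : T v x := rel_of_revTri_of_not_onTriangle_left hv hvx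
  have hyv : T y v := rel_of_revTri_of_not_onTriangle_right hv hyv
  obtain ⟨hxy, _⟩ | ⟨_, huy, hxu⟩ := hxy
  · exact hv ⟨x, y, hvx, hxy, hyv⟩
  · have huv : u ≠ v := by
      rintro rfl
      exact hT.asymm_s13 hvx hxu
    by_cases hvu : T v u
    · exact hv ⟨u, y, hvu, huy, hyv⟩
    · exact hv ⟨x, u, hvx, hxu, hT.rel_of_not_rel huv hvu⟩

theorem IsTournamentRel.exists_forall_mem_not_onTriangle (hT : IsTournamentRel T)
    (h : PathCompatible E T) (s : Finset V) :
    ∃ T' : V → V → Prop, IsTournamentRel T' ∧ PathCompatible E T' ∧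
      ∀ v ∈ s, ¬ OnTriangle T' v := by
  classical
  induction s using Finset.induction_on with
  | empty => exact ⟨T, hT, h, by simp⟩
  | insert u s _ ih =>
    obtain ⟨T', hT', h', htri⟩ := ih
    refine ⟨revTri T' u, isTournamentRel_revTri hT' u, pathCompatible_revTri hT' h' u, ?_⟩
    rw [Finset.forall_mem_insert]
    exact ⟨hT'.not_onTriangle_revTri_self u, fun v hv => hT'.not_onTriangle_revTri u (htri v hv)⟩

end Tournament

section UltrafilterLimit

variable {ι V : Type*} {U : Ultrafilter ι} {T : ι → V → V → Prop} {E : V → V → Prop} {v : V}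

theorem isTournamentRel_ultrafilterLimit (hT : ∀ i, IsTournamentRel (T i)) :
    IsTournamentRel (ultrafilterLimit U T) := by
  refine ⟨fun u => ?_, fun u v huv => ?_⟩
  · exact Ultrafilter.eventually_not.1 (.of_forall fun i => (hT i).1 u)
  · rw [ultrafilterLimit, ultrafilterLimit, ← Ultrafilter.eventually_not]
    exact Filter.eventually_congr (.of_forall fun i => (hT i).2 u v huv)

theorem pathCompatible_ultrafilterLimit (h : ∀ i, PathCompatible E (T i)) :
    PathCompatible E (ultrafilterLimit U T) := by
  intro a b c hab hbc hac
  obtain ⟨i, habᵢ, hbcᵢ⟩ := (hab.and hbc).exists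
  exact h i habᵢ hbcᵢ hac

theorem not_onTriangle_ultrafilterLimit (hv : ∀ᶠ i in U, ¬ OnTriangle (T i) v) :
    ¬ OnTriangle (ultrafilterLimit U T) v := by
  rintro ⟨x, y, hvx, hxy, hyv⟩
  obtain ⟨i, hvᵢ, hvxᵢ, hxyᵢ, hyvᵢ⟩ := (hv.and (hvx.and (hxy.and hyv))).exists
  exact hvᵢ ⟨x, y, hvxᵢ, hxyᵢ, hyvᵢ⟩

end UltrafilterLimit

theorem stmt_13_general {V : Type*} (E : V → V → Prop)
    (h : ∃ T : V → V → Prop, IsTournamentRel T ∧ ConsistentWith E T) :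
    ∃ T : V → V → Prop, IsTournamentRel T ∧ ConsistentWith E T ∧
      ∀ x : V, ¬ Relation.TransGen T x x := by
  obtain ⟨T₀, hT₀, hcons⟩ := h
  choose T hT hpath htri using
    hT₀.exists_forall_mem_not_onTriangle (hT₀.consistentWith_iff_pathCompatible.1 hcons)
  let U : Ultrafilter (Finset V) := .of Filter.atTop
  have limit_tournament : IsTournamentRel (ultrafilterLimit U T) :=
    isTournamentRel_ultrafilterLimit hT
  have eventually_not_onTriangle (v : V) : ∀ᶠ s in U, ¬ OnTriangle (T s) v := by
    filter_upwards [Ultrafilter.of_le _ (Filter.eventually_ge_atTop {v})] with s hs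
    exact htri s v (Finset.singleton_subset_iff.1 hs)
  exact ⟨ultrafilterLimit U T, limit_tournament,
    limit_tournament.consistentWith_iff_pathCompatible.2
      (pathCompatible_ultrafilterLimit hpath),
    limit_tournament.not_transGen_self fun v =>
      not_onTriangle_ultrafilterLimit (eventually_not_onTriangle v)⟩

/-- For a reflexive digraph `H`, if there exists a tournament on `V(H)`
consistent with `H`, then there exists an acyclic tournament on `V(H)` consistent with `H`. -/
theorem stmt_13 {V : Type*} [Fintype V] (E : V → V → Prop) (hrefl : ∀ v, E v v)
    (h : ∃ T : V → V → Prop, IsTournamentRel T ∧ ConsistentWith E T) :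
    ∃ T : V → V → Prop, IsTournamentRel T ∧ ConsistentWith E T ∧
      ∀ x : V, ¬ Relation.TransGen T x x :=
  stmt_13_general E h
end
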